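/- Let g ≥ 2 and let Γ be the fundamental group of the closed orientable surface of genus g, i.e. the presented group with generators a₁,b₁,…,a_g,b_g and the single relator [a₁,b₁][a₂,b₂]⋯[a_g,b_g]. If Δ₀ is a finitely generated subgroup of Γ, then there exist n ≥ 1 and an injective group homomorphism ρ : Γ → GL(n, ℂ) such that for every γ ∈ Γ with γ ∉ Δ₀ there exists a polynomial P in the n² matrix-entry variables with complex coefficients such that P vanishes at the matrix ρ(δ) for every δ ∈ Δ₀ but P(ρ(γ)) ≠ 0. -/

import Mathlib

open scoped commutatorElement

/-- The single relator `[a₁,b₁][a₂,b₂]⋯[a_g,b_g]` of the genus-`g` surface group, as an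
element of the free group on the `2g` generators `a₁,…,a_g` (indexed by `Sum.inl`) and
`b₁,…,b_g` (indexed by `Sum.inr`). -/
def surfaceRelator (g : ℕ) : FreeGroup (Fin g ⊕ Fin g) :=
  ((List.finRange g).map
    (fun i => ⁅FreeGroup.of (Sum.inl i : Fin g ⊕ Fin g),
               FreeGroup.of (Sum.inr i : Fin g ⊕ Fin g)⁆)).prod

/-- The fundamental group of the closed orientable surface of genus `g`. -/
def SurfaceGroup (g : ℕ) : Type :=
  PresentedGroup ({surfaceRelator g} : Set (FreeGroup (Fin g ⊕ Fin g)))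

noncomputable instance (g : ℕ) : Group (SurfaceGroup g) := by
  unfold SurfaceGroup; infer_instance

/-- Evaluate a polynomial in the `n²` matrix-entry variables at a matrix in `GL(n, ℂ)`. -/
noncomputable def evalAtGL {n : ℕ} (A : GL (Fin n) ℂ)
    (P : MvPolynomial (Fin n × Fin n) ℂ) : ℂ :=
  MvPolynomial.eval (fun p => (A : Matrix (Fin n) (Fin n) ℂ) p.1 p.2) P


/-- Cyclic adjacency. -/
def CAdj {B : Type} (c : Equiv.Perm B) (s t : B) : Prop := t = c s ∨ s = c t

theorem CAdj.symm {B : Type} {c : Equiv.Perm B} {s t : B} (h : CAdj c s t) : CAdj c t s :=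
  h.elim Or.inr Or.inl

/-- Nonnegative integral vectors. -/
def NPos {B : Type} (v : B → ℂ) : Prop := ∀ b, ∃ n : ℕ, v b = n

theorem NPos.plus {B : Type} {v w : B → ℂ} (hv : NPos v) (hw : NPos w) : NPos (v + w) := by
  intro b
  obtain ⟨n, hn⟩ := hv b
  obtain ⟨m, hm⟩ := hw b
  exact ⟨n + m, by simp [hn, hm]⟩

section RACG

variable {B : Type} [Fintype B] [DecidableEq B]

open Classical in
/-- The right-angled Coxeter matrix attached to the cyclic adjacency. -/
noncomputable def racM (c : Equiv.Perm B) : CoxeterMatrix B where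
  M := Matrix.of fun i j => if i = j then 1 else if CAdj c i j then 2 else 0
  isSymm := by
    ext i j
    have h : CAdj c i j ↔ CAdj c j i := ⟨CAdj.symm, CAdj.symm⟩
    simp only [Matrix.transpose_apply, Matrix.of_apply, h, eq_comm (a := i)]
  diagonal := by simp
  off_diagonal := by
    intro i j h
    simp only [Matrix.of_apply, h, if_false]
    split_ifs <;> simp

theorem racM_apply (c : Equiv.Perm B) (i j : B) [Decidable (CAdj c i j)] :
    racM c i j = if i = j then 1 else if CAdj c i j then 2 else 0 := by
  simp only [racM, Matrix.of_apply]
  congr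

theorem racM_liftable {c : Equiv.Perm B} {G : Type*} [Monoid G] (f : B → G)
    (h1 : ∀ s, f s * f s = 1) (h2 : ∀ s t, s ≠ t → CAdj c s t → f s * f t = f t * f s) :
    (racM c).IsLiftable f := by
  classical
  intro s t
  rw [racM_apply]
  split_ifs with h h'
  · subst h; simp [h1]
  · have := h2 s t h h'
    rw [pow_two]
    nth_rewrite 2 [this]
    rw [mul_assoc, ← mul_assoc (f t), h1, one_mul, h1]
  · simp

variable {c : Equiv.Perm B} {W : Type*} [Group W] (cs : CoxeterSystem (racM c) W)

theorem rac_comm {s t : B} (hst : CAdj c s t) :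
    cs.simple s * cs.simple t = cs.simple t * cs.simple s := by
  classical
  by_cases h : s = t
  · rw [h]
  have := cs.simple_mul_simple_pow s t
  rw [racM_apply, if_neg h, if_pos hst, pow_two] at this
  have h3 := eq_inv_of_mul_eq_one_left this
  rw [h3]; simp

open Classical in
/-- Tits form coefficients. -/
noncomputable def tk (c : Equiv.Perm B) (s t : B) : ℂ :=
  if s = t then 2 else if CAdj c s t then 0 else -2

/-- Linear form. -/
noncomputable def tbeta (c : Equiv.Perm B) (s : B) : (B → ℂ) →ₗ[ℂ] ℂ :=
  ∑ t, tk c s t • LinearMap.proj t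

theorem tbeta_single (c : Equiv.Perm B) (s t : B) : tbeta c s (Pi.single t 1) = tk c s t := by
  simp [tbeta, Pi.single_apply]

/-- Tits reflection. -/
noncomputable def trefl (c : Equiv.Perm B) (s : B) : Module.End ℂ (B → ℂ) :=
  LinearMap.id - (tbeta c s).smulRight (Pi.single s 1)

theorem trefl_apply (c : Equiv.Perm B) (s : B) (v : B → ℂ) :
    trefl c s v = v - tbeta c s v • Pi.single s 1 := rfl

theorem trefl_liftable (c : Equiv.Perm B) : (racM c).IsLiftable (trefl c) := by
  apply racM_liftable
  · intro s
    ext1 v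
    have : tbeta c s (Pi.single s 1) = 2 := by rw [tbeta_single]; simp [tk]
    apply LinearMap.ext
    intro x
    simp only [Module.End.mul_apply, trefl_apply, map_sub, map_smul, this, Module.End.one_apply,
      LinearMap.comp_apply]
    module
  · intro s t hst h
    have h1 : tbeta c s (Pi.single t 1) = 0 := by rw [tbeta_single]; simp [tk, hst, h]
    have h2 : tbeta c t (Pi.single s 1) = 0 := by rw [tbeta_single]; simp [tk, hst.symm, h.symm]
    apply LinearMap.ext
    intro x
    simp only [Module.End.mul_apply, trefl_apply, map_sub, map_smul, h1, h2]
    module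

/-- The Tits representation. -/
noncomputable def tits : W →* Module.End ℂ (B → ℂ) := cs.lift ⟨trefl c, trefl_liftable c⟩

theorem tits_simple (s : B) : tits cs (cs.simple s) = trefl c s :=
  cs.lift_apply_simple (trefl_liftable c) s

theorem tits_mul_single (w : W) (s t : B) :
    tits cs (w * cs.simple s) (Pi.single t 1) =
      tits cs w (Pi.single t 1) - tk c s t • tits cs w (Pi.single s 1) := by
  rw [map_mul, tits_simple, Module.End.mul_apply, trefl_apply, tbeta_single, map_sub, map_smul]

theorem tits_pos (n : ℕ) : ∀ w : W, cs.length w = n → ∀ s : B, ¬ cs.IsRightDescent w s →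
    NPos (tits cs w (Pi.single s 1)) ∧
    ∀ t, t ≠ s → ¬ CAdj c s t → cs.IsRightDescent w t →
      NPos (tits cs w (Pi.single s 1) + tits cs w (Pi.single t 1)) := by
  classical
  induction n with
  | zero =>
    intro w hw s hs
    rw [cs.length_eq_zero_iff] at hw
    subst hw
    refine ⟨?_, fun t _ _ h => absurd h (cs.not_isRightDescent_one t)⟩
    intro b
    rw [map_one, Module.End.one_apply, Pi.single_apply]
    split_ifs
    · exact ⟨1, by simp⟩
    · exact ⟨0, by simp⟩
  | succ n ih =>
    intro w hw s hs
    have key : ∀ t, cs.IsRightDescent w t → ¬ CAdj c s t →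
        NPos (tits cs w (Pi.single s 1)) ∧
        NPos (tits cs w (Pi.single s 1) + tits cs w (Pi.single t 1)) := by
      intro t ht hadj
      have hts : t ≠ s := by rintro rfl; exact hs ht
      obtain ⟨w', rfl⟩ : ∃ w', w = w' * cs.simple t := ⟨w * cs.simple t, by simp⟩
      have hl : ¬ cs.IsRightDescent w' t := by
        rw [cs.isRightDescent_iff_not_isRightDescent_mul] at ht
        simpa using ht
      have hlen : cs.length w' = n := by
        have := cs.not_isRightDescent_iff.1 hl
        omega
      have hadj' : ¬ CAdj c t s := fun h => hadj h.symm
      have hk : tk c t s = -2 := by simp [tk, hts, hadj']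
      have hk' : tk c t t = 2 := by simp [tk]
      have ht' := (ih w' hlen t hl).1
      have hsum : NPos (tits cs w' (Pi.single s 1) + tits cs w' (Pi.single t 1)) := by
        by_cases hd : cs.IsRightDescent w' s
        · rw [add_comm]
          exact (ih w' hlen t hl).2 s hts.symm hadj' hd
        · exact (ih w' hlen s hd).1.plus ht'
      rw [tits_mul_single, tits_mul_single, hk, hk']
      constructor
      · convert hsum.plus ht' using 1
        module
      · convert hsum using 1
        module
    refine ⟨?_, fun t _ h1 h2 => (key t h2 h1).2⟩
    have hw1 : w ≠ 1 := by
      rintro rfl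
      simp at hw
    obtain ⟨t, ht⟩ := cs.exists_rightDescent_of_ne_one hw1
    by_cases hadj : CAdj c s t
    · have hts : t ≠ s := by rintro rfl; exact hs ht
      obtain ⟨w', rfl⟩ : ∃ w', w = w' * cs.simple t := ⟨w * cs.simple t, by simp⟩
      have hl : ¬ cs.IsRightDescent w' t := by
        rw [cs.isRightDescent_iff_not_isRightDescent_mul] at ht
        simpa using ht
      have hlen : cs.length w' = n := by
        have := cs.not_isRightDescent_iff.1 hl
        omega
      have hk : tk c t s = 0 := by simp [tk, hts, hadj.symm]
      rw [tits_mul_single, hk, zero_smul, sub_zero]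
      refine (ih w' hlen s ?_).1
      intro hd
      have h1 := cs.isRightDescent_iff.1 hd
      have h2 := cs.not_isRightDescent_iff.1 hs
      rw [mul_assoc, ← rac_comm cs hadj, ← mul_assoc] at h2
      have h3 := cs.length_mul_le (w' * cs.simple s) (cs.simple t)
      rw [cs.length_simple] at h3
      omega
    · exact (key t ht hadj).1

theorem tits_injective : Function.Injective (tits cs) := by
  rw [injective_iff_map_eq_one]
  intro w hw
  by_contra hne
  obtain ⟨t, ht⟩ := cs.exists_rightDescent_of_ne_one hne
  obtain ⟨w', rfl⟩ : ∃ w', w = w' * cs.simple t := ⟨w * cs.simple t, by simp⟩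
  have hl : ¬ cs.IsRightDescent w' t := by
    rw [cs.isRightDescent_iff_not_isRightDescent_mul] at ht
    simpa using ht
  have h1 := (tits_pos cs _ w' rfl t hl).1 t
  have h2 := congrFun (tits_mul_single cs w' t t) t
  rw [hw] at h2
  obtain ⟨n, hn⟩ := h1
  simp [tk, hn] at h2
  have h3 : ((n : ℂ) + 1) = 0 := by linear_combination h2
  exact Nat.cast_add_one_ne_zero n h3

end RACG

theorem linear_to_poly {G : Type*} [Group G] {M : Type} [AddCommGroup M] [Module ℂ M]
    [FiniteDimensional ℂ M] [Nontrivial M] (R : G →* Module.End ℂ M) (hR : Function.Injective R)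
    (H : Subgroup G)
    (hH : ∀ γ ∉ H, ∃ l : Module.End ℂ M →ₗ[ℂ] ℂ, (∀ δ ∈ H, l (R δ) = 0) ∧ l (R γ) ≠ 0) :
    ∃ (n : ℕ) (ρ : G →* GL (Fin n) ℂ), 1 ≤ n ∧ Function.Injective ρ ∧
      ∀ γ : G, γ ∉ H → ∃ P : MvPolynomial (Fin n × Fin n) ℂ,
          (∀ δ ∈ H, evalAtGL (ρ δ) P = 0) ∧ evalAtGL (ρ γ) P ≠ 0 := by
  classical
  let b := Module.finBasis ℂ M
  let e := LinearMap.toMatrixAlgEquiv b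
  let R' : G →* Matrix (Fin (Module.finrank ℂ M)) (Fin (Module.finrank ℂ M)) ℂ :=
    (e : Module.End ℂ M →* _).comp R
  have hR' : ∀ x, R' x = e (R x) := fun x => rfl
  let ρ : G →* GL (Fin (Module.finrank ℂ M)) ℂ := R'.toHomUnits
  have hρ : ∀ x, ((ρ x : GL _ ℂ) : Matrix _ _ ℂ) = e (R x) := fun x => rfl
  refine ⟨Module.finrank ℂ M, ρ, Module.finrank_pos, ?_, ?_⟩
  · intro x y hxy
    apply hR
    apply e.injective
    rw [← hρ, ← hρ, hxy]
  · intro γ hγ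
    obtain ⟨l, h1, h2⟩ := hH γ hγ
    let P : MvPolynomial (Fin (Module.finrank ℂ M) × Fin (Module.finrank ℂ M)) ℂ :=
      ∑ i, ∑ j, MvPolynomial.C (l (e.symm (Matrix.single i j 1))) * MvPolynomial.X (i, j)
    have hP : ∀ x, evalAtGL (ρ x) P = l (R x) := by
      intro x
      have h3 : R x = e.symm (e (R x)) := (e.symm_apply_apply _).symm
      rw [h3]
      conv_rhs => rw [Matrix.matrix_eq_sum_single (e (R x))]
      simp only [evalAtGL, P, map_sum, map_mul, MvPolynomial.eval_C, MvPolynomial.eval_X, hρ]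
      refine Finset.sum_congr rfl fun i _ => Finset.sum_congr rfl fun j _ => ?_
      have : Matrix.single i j (e (R x) i j) = (e (R x) i j) • Matrix.single i j (1 : ℂ) := by
        simp
      rw [this, map_smul, map_smul, smul_eq_mul, mul_comm]
    exact ⟨P, fun δ hδ => by rw [hP, h1 δ hδ], by rwa [hP]⟩

section Graphs

/-- Walks in a labelled graph, reading the word from right to left. -/
def Walk {B V : Type} (E : B → V → V → Prop) : List B → V → V → Prop
  | [], x, y => x = y
  | s :: l, x, y => ∃ z, Walk E l x z ∧ E s z y

theorem Walk.map {B V V' : Type} {E : B → V → V → Prop} {E' : B → V' → V' → Prop} (φ : V → V')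
    (h : ∀ s x y, E s x y → E' s (φ x) (φ y)) :
    ∀ (l : List B) (x y : V), Walk E l x y → Walk E' l (φ x) (φ y)
  | [], x, y, hw => congrArg φ hw
  | s :: l, x, y, ⟨z, h1, h2⟩ => ⟨φ z, Walk.map φ h l x z h1, h _ _ _ h2⟩

theorem Walk.append {B V : Type} {E : B → V → V → Prop} :
    ∀ (l₁ l₂ : List B) (x y z : V), Walk E l₂ x y → Walk E l₁ y z → Walk E (l₁ ++ l₂) x z
  | [], l₂, x, y, z, h, h' => by cases h'; exact h
  | s :: l, l₂, x, y, z, h, ⟨u, h1, h2⟩ => ⟨u, Walk.append l l₂ x y u h h1, h2⟩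

theorem Walk.reverse {B V : Type} {E : B → V → V → Prop} (hE : ∀ s x y, E s x y → E s y x) :
    ∀ (l : List B) (x y : V), Walk E l x y → Walk E l.reverse y x
  | [], x, y, h => h.symm
  | s :: l, x, y, ⟨u, h1, h2⟩ => by
    rw [List.reverse_cons]
    exact Walk.append _ _ _ u _ ⟨y, rfl, hE _ _ _ h2⟩ (Walk.reverse hE l _ _ h1)

/-- A full square corner. -/
def FullC {B V : Type} (E : B → V → V → Prop) (x : V) (s t : B) : Prop :=
  ∃ a b z, E s x a ∧ E t x b ∧ E t a z ∧ E s b z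

theorem FullC.symm {B V : Type} {E : B → V → V → Prop} {x : V} {s t : B} (h : FullC E x s t) :
    FullC E x t s := by
  obtain ⟨a, b, z, h1, h2, h3, h4⟩ := h
  exact ⟨b, a, z, h2, h1, h4, h3⟩

theorem FullC.map {B V V' : Type} {E : B → V → V → Prop} {E' : B → V' → V' → Prop} (φ : V → V')
    (h : ∀ s x y, E s x y → E' s (φ x) (φ y)) {x : V} {s t : B} (hx : FullC E x s t) :
    FullC E' (φ x) s t := by
  obtain ⟨a, b, z, h1, h2, h3, h4⟩ := hx
  exact ⟨φ a, φ b, φ z, h _ _ _ h1, h _ _ _ h2, h _ _ _ h3, h _ _ _ h4⟩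

/-- Flags that are not full. -/
def NF {B V : Type} (c : Equiv.Perm B) (E : B → V → V → Prop) : Set (V × B × B) :=
  {q | CAdj c q.2.1 q.2.2 ∧ (∃ a, E q.2.1 q.1 a) ∧ ¬ FullC E q.1 q.2.1 q.2.2}

/-- Darts. -/
def Darts {B V : Type} (E : B → V → V → Prop) : Set (V × B) := {q | ∃ a, E q.2 q.1 a}

variable {B : Type} [Fintype B] [DecidableEq B] {c : Equiv.Perm B} {W : Type} [Group W]

/-- Finite partial graphs immersed in the Schreier graph of `H` and carrying `H`. -/
structure PG (cs : CoxeterSystem (racM c) W) (H : Subgroup W) where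
  V : Type
  fin : Finite V
  E : B → V → V → Prop
  symm : ∀ s x y, E s x y → E s y x
  det : ∀ s x y y', E s x y → E s x y' → y = y'
  f : V → W ⧸ H
  hf : ∀ s x y, E s x y → f y = cs.simple s • f x
  base : V
  hbase : f base = ((1 : W) : W ⧸ H)
  deg : ∀ x, ∃ s y, E s x y
  carry : ∀ h ∈ H, ∃ l : List B, cs.wordProd l = h ∧ Walk E l base base

/-- Boundary length. -/
noncomputable def PG.L {cs : CoxeterSystem (racM c) W} {H : Subgroup W} (Y : PG cs H) : ℕ :=
  (NF c Y.E).ncard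

/-- Curvature. -/
noncomputable def PG.X {cs : CoxeterSystem (racM c) W} {H : Subgroup W} (Y : PG cs H) : ℤ :=
  4 * (Nat.card Y.V : ℤ) - ((Darts Y.E).ncard : ℤ)

variable {cs : CoxeterSystem (racM c) W} {H : Subgroup W}

theorem PG.bound (hcyc : ∀ s t : B, ∃ n : ℕ, (c ^ n) s = t) (h5 : 5 ≤ Fintype.card B)
    (Y : PG cs H) : (Nat.card Y.V : ℤ) ≤ 5 * (Y.L : ℤ) - Y.X := by
  classical
  have := Y.fin
  obtain ⟨e⟩ : Nonempty (Fin 5 ↪ B) :=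
    Function.Embedding.nonempty_of_card_le (by simpa using h5)
  have hall : ∀ x : Y.V, (¬ ∃ q ∈ NF c Y.E, q.1 = x) → ∀ s, ∃ a, Y.E s x a := by
    intro x hx s
    obtain ⟨s0, y, h0⟩ := Y.deg x
    have key : ∀ n : ℕ, ∃ a, Y.E ((c ^ n) s0) x a := by
      intro n
      induction n with
      | zero => exact ⟨y, h0⟩
      | succ n ih =>
        by_contra hcon
        apply hx
        refine ⟨(x, (c ^ n) s0, (c ^ (n + 1)) s0), ⟨Or.inl ?_, ih, ?_⟩, rfl⟩
        · simp [pow_succ']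
        · rintro ⟨a, b, z, _, h2, _⟩
          exact hcon ⟨b, h2⟩
    obtain ⟨n, hn⟩ := hcyc s0 s
    rw [← hn]
    exact key n
  let F : Y.V × Fin 5 → (Darts Y.E) ⊕ (NF c Y.E × Fin 5) := fun p =>
    if h : ∃ q ∈ NF c Y.E, q.1 = p.1 then Sum.inr (⟨h.choose, h.choose_spec.1⟩, p.2)
    else Sum.inl ⟨(p.1, e p.2), hall p.1 h _⟩
  have hF : Function.Injective F := by
    rintro ⟨x, i⟩ ⟨x', i'⟩ hxx
    by_cases h : ∃ q ∈ NF c Y.E, q.1 = x <;> by_cases h' : ∃ q ∈ NF c Y.E, q.1 = x'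
    · simp only [F, h, h', dif_pos, Sum.inr.injEq, Prod.mk.injEq, Subtype.mk.injEq] at hxx
      have h1 := h.choose_spec.2
      have h2 := h'.choose_spec.2
      rw [hxx.1] at h1
      rw [Prod.mk.injEq]
      exact ⟨h1.symm.trans h2, hxx.2⟩
    · simp only [F, h, h', dif_pos, dif_neg, not_false_eq_true, reduceCtorEq] at hxx
    · simp only [F, h, h', dif_pos, dif_neg, not_false_eq_true, reduceCtorEq] at hxx
    · simp only [F, h, h', dif_neg, not_false_eq_true, Sum.inl.injEq] at hxx
      have hxx' := congrArg Subtype.val hxx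
      simp only [Prod.mk.injEq] at hxx'
      rw [Prod.mk.injEq]
      exact ⟨hxx'.1, e.injective hxx'.2⟩
  have := Nat.card_le_card_of_injective F hF
  rw [Nat.card_sum, Nat.card_prod, Nat.card_prod, Nat.card_coe_set_eq, Nat.card_coe_set_eq,
    Nat.card_fin] at this
  unfold PG.X PG.L
  have h' : (Nat.card Y.V : ℤ) * 5 ≤ (Darts Y.E).ncard + (NF c Y.E).ncard * 5 := by
    exact_mod_cast this
  linarith

theorem rac_smul_comm {s t : B} (hst : CAdj c s t) (p : W ⧸ H) :
    cs.simple s • cs.simple t • p = cs.simple t • cs.simple s • p := by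
  rw [smul_smul, smul_smul, rac_comm cs hst]

theorem rac_smul_smul (s : B) (p : W ⧸ H) : cs.simple s • cs.simple s • p = p := by
  rw [smul_smul, cs.simple_mul_simple_self, one_smul]

/-- The image graph. -/
def PG.image (Y : PG cs H) : PG cs H where
  V := Set.range Y.f
  fin := by haveI := Y.fin; exact Set.finite_range Y.f
  E s p q := ∃ x y, Y.E s x y ∧ Y.f x = p ∧ Y.f y = q
  symm := by
    rintro s p q ⟨x, y, h, h1, h2⟩
    exact ⟨y, x, Y.symm _ _ _ h, h2, h1⟩
  det := by
    rintro s p q q' ⟨x, y, h, h1, h2⟩ ⟨x', y', h', h1', h2'⟩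
    apply Subtype.ext
    rw [← h2, ← h2', Y.hf _ _ _ h, Y.hf _ _ _ h', h1, h1']
  f p := p.1
  hf := by
    rintro s p q ⟨x, y, h, h1, h2⟩
    rw [← h1, ← h2, Y.hf _ _ _ h]
  base := ⟨Y.f Y.base, Y.base, rfl⟩
  hbase := Y.hbase
  deg := by
    rintro ⟨_, x, rfl⟩
    obtain ⟨s, y, h⟩ := Y.deg x
    exact ⟨s, ⟨Y.f y, y, rfl⟩, x, y, h, rfl, rfl⟩
  carry := by
    intro h hh
    obtain ⟨l, h1, h2⟩ := Y.carry h hh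
    refine ⟨l, h1, ?_⟩
    exact Walk.map (fun x => (⟨Y.f x, x, rfl⟩ : Set.range Y.f))
      (fun s x y h => ⟨x, y, h, rfl, rfl⟩) l _ _ h2

theorem PG.image_lt (Y : PG cs H) (x : Y.V) (s t : B) (hq : (x, s, t) ∈ NF c Y.E)
    (hfull : FullC Y.image.E ⟨Y.f x, x, rfl⟩ s t) : Y.image.L < Y.L := by
  classical
  have := Y.fin
  let π : Y.V × B × B → Y.image.V × B × B := fun q => (⟨Y.f q.1, q.1, rfl⟩, q.2)
  have hlift : NF c Y.image.E ⊆ π '' (NF c Y.E \ {(x, s, t)}) := by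
    rintro ⟨p, s', t'⟩ ⟨h1, ⟨q, y, y', h2, h3, h4⟩, h5⟩
    have hp : p = ⟨Y.f y, y, rfl⟩ := Subtype.ext h3.symm
    subst hp
    refine ⟨(y, s', t'), ⟨⟨h1, ⟨y', h2⟩, ?_⟩, ?_⟩, rfl⟩
    · intro hf
      exact h5 (FullC.map (E' := Y.image.E) (fun x => (⟨Y.f x, x, rfl⟩ : Set.range Y.f))
        (fun s x y h => ⟨x, y, h, rfl, rfl⟩) hf)
    · rintro heq
      simp only [Set.mem_singleton_iff, Prod.mk.injEq] at heq
      obtain ⟨rfl, rfl, rfl⟩ := heq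
      exact h5 hfull
  calc Y.image.L ≤ (π '' (NF c Y.E \ {(x, s, t)})).ncard := Set.ncard_le_ncard hlift (Set.toFinite _)
    _ ≤ (NF c Y.E \ {(x, s, t)}).ncard := Set.ncard_image_le (Set.toFinite _)
    _ < Y.L := Set.ncard_diff_singleton_lt_of_mem hq (Set.toFinite _)

/-- The relation with one more edge. -/
def addE {B V : Type} (E : B → V → V → Prop) (s : B) (z b : V) : B → V → V → Prop :=
  fun s' p q => E s' p q ∨ (s' = s ∧ ((p = z ∧ q = b) ∨ (p = b ∧ q = z)))

/-- Adding an edge. -/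
def PG.addEdge (Y : PG cs H) (s : B) (z b : Y.V) (hz : ¬ ∃ u, Y.E s z u) (hb : ¬ ∃ u, Y.E s b u)
    (hfz : Y.f b = cs.simple s • Y.f z) : PG cs H where
  V := Y.V
  fin := Y.fin
  E := addE Y.E s z b
  symm := by
    rintro s' p q (h | ⟨rfl, (⟨rfl, rfl⟩ | ⟨rfl, rfl⟩)⟩)
    · exact Or.inl (Y.symm _ _ _ h)
    · exact Or.inr ⟨rfl, Or.inr ⟨rfl, rfl⟩⟩
    · exact Or.inr ⟨rfl, Or.inl ⟨rfl, rfl⟩⟩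
  det := by
    rintro s' p q q' (h | ⟨rfl, (⟨rfl, rfl⟩ | ⟨rfl, rfl⟩)⟩) (h' | ⟨h0, (⟨h1, h2⟩ | ⟨h1, h2⟩)⟩)
    · exact Y.det _ _ _ _ h h'
    · subst h0 h1; exact absurd ⟨_, h⟩ hz
    · subst h0 h1; exact absurd ⟨_, h⟩ hb
    · exact absurd ⟨_, h'⟩ hz
    · exact h2.symm
    · rw [h2]; exact h1.symm
    · exact absurd ⟨_, h'⟩ hb
    · rw [h2]; exact h1.symm
    · exact h2.symm
  f := Y.f
  hf := by
    rintro s' p q (h | ⟨rfl, (⟨rfl, rfl⟩ | ⟨rfl, rfl⟩)⟩)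
    · exact Y.hf _ _ _ h
    · exact hfz
    · rw [hfz, rac_smul_smul]
  base := Y.base
  hbase := Y.hbase
  deg x := by
    obtain ⟨s, y, h⟩ := Y.deg x
    exact ⟨s, y, Or.inl h⟩
  carry := by
    intro h hh
    obtain ⟨l, h1, h2⟩ := Y.carry h hh
    exact ⟨l, h1, Walk.map (E' := addE Y.E s z b) id (fun s x y h => Or.inl h) l _ _ h2⟩

open Classical in
/-- The other neighbour. -/
noncomputable def oth (c : Equiv.Perm B) (s t : B) : B := if t = c s then c.symm s else c s

theorem oth_spec {s t r : B} (h : CAdj c s t) (hr : CAdj c s r) (hne : r ≠ t) : r = oth c s t := by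
  unfold oth
  split_ifs with h1
  · rcases hr with h2 | h2
    · exact absurd (h2.trans h1.symm) hne
    · rw [h2]; simp
  · rcases h with h2 | h2
    · exact absurd h2 h1
    · rcases hr with h3 | h3
      · exact h3
      · exact absurd (c.injective (h3.symm.trans h2)) hne

theorem addE_lt {V : Type} [Finite V] (E : B → V → V → Prop) (symm : ∀ s x y, E s x y → E s y x)
    (det : ∀ s x y y', E s x y → E s x y' → y = y')
    (s t : B) (hst : CAdj c s t) (hne : s ≠ t) (x a b z : V)
    (hxa : E s x a) (hxb : E t x b) (haz : E t a z) (hb : ¬ ∃ u, E s b u) :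
    (NF c (addE E s z b)).ncard < (NF c E).ncard := by
  classical
  set E' := addE E s z b with hE'
  have hmono : ∀ s x y, E s x y → E' s x y := fun s x y h => Or.inl h
  have e1 : E' s z b := Or.inr ⟨rfl, Or.inl ⟨rfl, rfl⟩⟩
  have e2 : E' s b z := Or.inr ⟨rfl, Or.inr ⟨rfl, rfl⟩⟩
  have hxb' : b ≠ x := by rintro rfl; exact hb ⟨_, hxa⟩
  have F1 : FullC E' x s t := ⟨a, b, z, hmono _ _ _ hxa, hmono _ _ _ hxb, hmono _ _ _ haz, e2⟩
  have F2 : FullC E' b s t := ⟨z, x, a, e2, hmono _ _ _ (symm _ _ _ hxb),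
    hmono _ _ _ (symm _ _ _ haz), hmono _ _ _ hxa⟩
  have F3 : FullC E' z s t := ⟨b, a, x, e1, hmono _ _ _ (symm _ _ _ haz),
    hmono _ _ _ (symm _ _ _ hxb), hmono _ _ _ (symm _ _ _ hxa)⟩
  have nf : ¬ FullC E x s t := by
    rintro ⟨a', b', z', h1, h2, h3, h4⟩
    have := det _ _ _ _ h2 hxb
    subst this
    exact hb ⟨_, h4⟩
  let T : Set (V × B × B) := {(x, s, t), (x, t, s), (b, t, s)}
  let U : Set (V × B × B) := {(z, s, oth c s t), (b, s, oth c s t)}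
  have hT : T.ncard = 3 := by
    rw [Set.ncard_eq_three]
    refine ⟨_, _, _, ?_, ?_, ?_, rfl⟩ <;> simp [hne, hxb'.symm]
  have hU : U.ncard ≤ 2 := by
    refine (Set.ncard_insert_le _ _).trans ?_
    simp
  have hTN : T ⊆ NF c E := by
    rintro q (rfl | rfl | rfl)
    · exact ⟨hst, ⟨_, hxa⟩, nf⟩
    · exact ⟨hst.symm, ⟨_, hxb⟩, fun h => nf h.symm⟩
    · refine ⟨hst.symm, ⟨_, symm _ _ _ hxb⟩, ?_⟩
      rintro ⟨a', b', z', h1, h2, h3, h4⟩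
      exact hb ⟨_, h2⟩
  have hsub : NF c E' ⊆ (NF c E \ T) ∪ U := by
    rintro ⟨y, s', r⟩ ⟨h1, ⟨y', h2⟩, h3⟩
    dsimp only at h1 h2 h3
    rcases h2 with h | ⟨rfl, h⟩
    · left
      refine ⟨⟨h1, ⟨_, h⟩, fun hf => h3 (hf.map id hmono)⟩, ?_⟩
      intro hq
      simp only [T, Set.mem_insert_iff, Set.mem_singleton_iff, Prod.mk.injEq] at hq
      rcases hq with ⟨rfl, rfl, rfl⟩ | ⟨rfl, rfl, rfl⟩ | ⟨rfl, rfl, rfl⟩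
      · exact h3 F1
      · exact h3 F1.symm
      · exact h3 F2.symm
    · right
      have hrt : r ≠ t := by
        rintro rfl
        rcases h with ⟨rfl, _⟩ | ⟨rfl, _⟩
        · exact h3 F3
        · exact h3 F2
      rw [oth_spec hst h1 hrt]
      rcases h with ⟨rfl, _⟩ | ⟨rfl, _⟩ <;> simp [U]
  have h1 : (NF c E').ncard ≤ ((NF c E \ T) ∪ U).ncard := Set.ncard_le_ncard hsub (Set.toFinite _)
  have h2 := Set.ncard_union_le (NF c E \ T) U
  have h3 := Set.ncard_sdiff_add_ncard_of_subset hTN (Set.toFinite _)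
  omega

theorem PG.addEdge_lt (Y : PG cs H) (s t : B) (hst : CAdj c s t) (hne : s ≠ t) (x a b z : Y.V)
    (hxa : Y.E s x a) (hxb : Y.E t x b) (haz : Y.E t a z)
    (hz : ¬ ∃ u, Y.E s z u) (hb : ¬ ∃ u, Y.E s b u)
    (hfz : Y.f b = cs.simple s • Y.f z) : (Y.addEdge s z b hz hb hfz).L < Y.L := by
  have := Y.fin
  exact addE_lt Y.E Y.symm Y.det s t hst hne x a b z hxa hxb haz hb

end Graphs

section Graphs2

/-- The relation with a new vertex completing a square. -/
def addV {B V : Type} (E : B → V → V → Prop) (s t : B) (a b : V) :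
    B → Option V → Option V → Prop :=
  fun s' p q => (∃ x y, p = some x ∧ q = some y ∧ E s' x y) ∨
    (s' = t ∧ ((p = some a ∧ q = none) ∨ (p = none ∧ q = some a))) ∨
    (s' = s ∧ ((p = some b ∧ q = none) ∨ (p = none ∧ q = some b)))

theorem addV_some_some {B V : Type} {E : B → V → V → Prop} {s t : B} {a b : V} {s' : B} {x y : V} :
    addV E s t a b s' (some x) (some y) ↔ E s' x y := by
  simp [addV]

theorem addV_some_none {B V : Type} {E : B → V → V → Prop} {s t : B} {a b : V} {s' : B} {x : V} :
    addV E s t a b s' (some x) none ↔ (s' = t ∧ x = a) ∨ (s' = s ∧ x = b) := by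
  simp [addV]

theorem addV_none_some {B V : Type} {E : B → V → V → Prop} {s t : B} {a b : V} {s' : B} {x : V} :
    addV E s t a b s' none (some x) ↔ (s' = t ∧ x = a) ∨ (s' = s ∧ x = b) := by
  simp [addV]

theorem addV_none_none {B V : Type} {E : B → V → V → Prop} {s t : B} {a b : V} {s' : B} :
    ¬ addV E s t a b s' none none := by
  simp [addV]

variable {B : Type} [Fintype B] [DecidableEq B] {c : Equiv.Perm B} {W : Type} [Group W]

theorem addV_darts {V : Type} [Finite V] (E : B → V → V → Prop) (s t : B) (a b : V) :
    (Darts (addV E s t a b)).ncard ≤ (Darts E).ncard + 4 := by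
  classical
  let U : Set (Option V × B) := {(some a, t), (some b, s), (none, s), (none, t)}
  have hU : U.ncard ≤ 4 := by
    refine (Set.ncard_insert_le _ _).trans ?_
    refine Nat.succ_le_succ ((Set.ncard_insert_le _ _).trans ?_)
    refine Nat.succ_le_succ ((Set.ncard_insert_le _ _).trans ?_)
    simp
  have hsub : Darts (addV E s t a b) ⊆ (fun q : V × B => (some q.1, q.2)) '' Darts E ∪ U := by
    rintro ⟨p, s'⟩ ⟨q, h⟩
    rcases p with _ | x <;> rcases q with _ | y
    · exact absurd h addV_none_none
    · right
      rcases addV_none_some.1 h with ⟨h1, h2⟩ | ⟨h1, h2⟩ <;> dsimp at h1 <;> subst h1 <;> simp [U]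
    · right
      rcases addV_some_none.1 h with ⟨h1, h2⟩ | ⟨h1, h2⟩ <;> dsimp at h1 <;> subst h1 h2 <;> simp [U]
    · left
      exact ⟨(x, s'), ⟨y, addV_some_some.1 h⟩, rfl⟩
  have h1 := Set.ncard_le_ncard hsub (Set.toFinite _)
  have h2 := Set.ncard_union_le ((fun q : V × B => (some q.1, q.2)) '' Darts E) U
  have h3 := Set.ncard_image_le (f := fun q : V × B => (some q.1, q.2)) (Set.toFinite (Darts E))
  omega

theorem addV_le {V : Type} [Finite V] (E : B → V → V → Prop) (symm : ∀ s x y, E s x y → E s y x)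
    (s t : B) (hst : CAdj c s t) (hne : s ≠ t) (x a b : V)
    (hxa : E s x a) (hxb : E t x b) (nf : ¬ FullC E x s t)
    (ha : ¬ ∃ u, E t a u) (hb : ¬ ∃ u, E s b u) :
    (NF c (addV E s t a b)).ncard ≤ (NF c E).ncard := by
  classical
  set E' := addV E s t a b with hE'
  have hmono : ∀ s x y, E s x y → E' s (some x) (some y) := fun s x y h => addV_some_some.2 h
  have eb : E' s (some b) none := addV_some_none.2 (Or.inr ⟨rfl, rfl⟩)
  have eb' : E' s none (some b) := addV_none_some.2 (Or.inr ⟨rfl, rfl⟩)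
  have ea : E' t (some a) none := addV_some_none.2 (Or.inl ⟨rfl, rfl⟩)
  have ea' : E' t none (some a) := addV_none_some.2 (Or.inl ⟨rfl, rfl⟩)
  have exa := hmono _ _ _ hxa
  have exb := hmono _ _ _ hxb
  have eax := hmono _ _ _ (symm _ _ _ hxa)
  have ebx := hmono _ _ _ (symm _ _ _ hxb)
  have Fx : FullC E' (some x) s t := ⟨_, _, _, exa, exb, ea, eb⟩
  have Fa : FullC E' (some a) s t := ⟨_, _, _, eax, ea, exb, eb'⟩
  have Fb : FullC E' (some b) s t := ⟨_, _, _, eb, ebx, ea', exa⟩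
  have Fz : FullC E' none s t := ⟨_, _, _, eb', ea', ebx, eax⟩
  have hxb' : x ≠ b := by rintro rfl; exact hb ⟨_, hxa⟩
  have hxa' : x ≠ a := by rintro rfl; exact ha ⟨_, hxb⟩
  let T : Set (V × B × B) := {(x, s, t), (x, t, s), (a, s, t), (b, t, s)}
  let U : Set (Option V × B × B) :=
    {(some a, t, oth c t s), (some b, s, oth c s t), (none, s, oth c s t), (none, t, oth c t s)}
  have hU : U.ncard ≤ 4 := by
    refine (Set.ncard_insert_le _ _).trans ?_
    refine Nat.succ_le_succ ((Set.ncard_insert_le _ _).trans ?_)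
    refine Nat.succ_le_succ ((Set.ncard_insert_le _ _).trans ?_)
    simp
  have hT : T.ncard = 4 := by
    have : T = (({(x, s, t), (x, t, s), (a, s, t), (b, t, s)} : Finset (V × B × B)) : Set _) := by
      simp [T]
    rw [this, Set.ncard_coe_finset]
    rw [Finset.card_insert_of_notMem, Finset.card_insert_of_notMem, Finset.card_insert_of_notMem,
      Finset.card_singleton] <;> simp [hne, hne.symm, hxa', hxb']
  have hTN : T ⊆ NF c E := by
    rintro q (rfl | rfl | rfl | rfl)
    · exact ⟨hst, ⟨_, hxa⟩, nf⟩
    · exact ⟨hst.symm, ⟨_, hxb⟩, fun h => nf h.symm⟩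
    · refine ⟨hst, ⟨_, symm _ _ _ hxa⟩, ?_⟩
      rintro ⟨a', b', z', h1, h2, h3, h4⟩
      exact ha ⟨_, h2⟩
    · refine ⟨hst.symm, ⟨_, symm _ _ _ hxb⟩, ?_⟩
      rintro ⟨a', b', z', h1, h2, h3, h4⟩
      exact hb ⟨_, h2⟩
  let ι : V × B × B → Option V × B × B := fun q => (some q.1, q.2)
  have hsub : NF c E' ⊆ ι '' (NF c E \ T) ∪ U := by
    rintro ⟨y, s', r⟩ ⟨h1, ⟨y', h2⟩, h3⟩
    dsimp only at h1 h2 h3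
    have side : ((s' = t ∧ (y = some a ∨ y = none)) ∨ (s' = s ∧ (y = some b ∨ y = none))) →
        (y, s', r) ∈ U := by
      rintro (⟨rfl, h⟩ | ⟨rfl, h⟩)
      · have hr : r ≠ s := by
          rintro rfl
          rcases h with rfl | rfl
          · exact h3 Fa.symm
          · exact h3 Fz.symm
        rw [oth_spec hst.symm h1 hr]
        rcases h with rfl | rfl <;> simp [U]
      · have hr : r ≠ t := by
          rintro rfl
          rcases h with rfl | rfl
          · exact h3 Fb
          · exact h3 Fz
        rw [oth_spec hst h1 hr]
        rcases h with rfl | rfl <;> simp [U]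
    rcases y with _ | y <;> rcases y' with _ | y'
    · exact absurd h2 addV_none_none
    · right
      apply side
      rcases addV_none_some.1 h2 with ⟨h, _⟩ | ⟨h, _⟩ <;> simp [h]
    · right
      apply side
      rcases addV_some_none.1 h2 with ⟨h, h'⟩ | ⟨h, h'⟩ <;> simp [h, h']
    · left
      refine ⟨(y, s', r), ⟨⟨h1, ⟨_, addV_some_some.1 h2⟩, fun hf => h3 (hf.map some hmono)⟩, ?_⟩, rfl⟩
      intro hq
      simp only [T, Set.mem_insert_iff, Set.mem_singleton_iff, Prod.mk.injEq] at hq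
      rcases hq with ⟨rfl, rfl, rfl⟩ | ⟨rfl, rfl, rfl⟩ | ⟨rfl, rfl, rfl⟩ | ⟨rfl, rfl, rfl⟩
      · exact h3 Fx
      · exact h3 Fx.symm
      · exact h3 Fa
      · exact h3 Fb.symm
  have h1 := Set.ncard_le_ncard hsub (Set.toFinite _)
  have h2 := Set.ncard_union_le (ι '' (NF c E \ T)) U
  have h3 := Set.ncard_sdiff_add_ncard_of_subset hTN (Set.toFinite _)
  have h4 := Set.ncard_image_le (f := ι) (Set.toFinite (NF c E \ T))
  omega

variable {cs : CoxeterSystem (racM c) W} {H : Subgroup W}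

/-- Adding a vertex. -/
noncomputable def PG.addVert (Y : PG cs H) (s t : B) (hst : CAdj c s t) (x a b : Y.V)
    (hxa : Y.E s x a) (hxb : Y.E t x b) (hab : ¬ (s = t))
    (ha : ¬ ∃ u, Y.E t a u) (hb : ¬ ∃ u, Y.E s b u) : PG cs H where
  V := Option Y.V
  fin := by have := Y.fin; infer_instance
  E := addV Y.E s t a b
  symm := by
    rintro s' (_ | p) (_ | q) h
    · exact h
    · exact addV_some_none.2 (addV_none_some.1 h)
    · exact addV_none_some.2 (addV_some_none.1 h)
    · exact addV_some_some.2 (Y.symm _ _ _ (addV_some_some.1 h))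
  det := by
    rintro s' (_ | p) (_ | q) (_ | q') h h'
    · rfl
    · exact absurd h addV_none_none
    · exact absurd h' addV_none_none
    · rcases addV_none_some.1 h with ⟨h1, h2⟩ | ⟨h1, h2⟩ <;>
        rcases addV_none_some.1 h' with ⟨h3, h4⟩ | ⟨h3, h4⟩
      · rw [h2, h4]
      · exact absurd (h3.symm.trans h1) hab
      · exact absurd (h1.symm.trans h3) hab
      · rw [h2, h4]
    · rfl
    · rcases addV_some_none.1 h with ⟨h1, h2⟩ | ⟨h1, h2⟩ <;> subst h1 h2
      · exact absurd ⟨_, addV_some_some.1 h'⟩ ha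
      · exact absurd ⟨_, addV_some_some.1 h'⟩ hb
    · rcases addV_some_none.1 h' with ⟨h1, h2⟩ | ⟨h1, h2⟩ <;> subst h1 h2
      · exact absurd ⟨_, addV_some_some.1 h⟩ ha
      · exact absurd ⟨_, addV_some_some.1 h⟩ hb
    · rw [Y.det _ _ _ _ (addV_some_some.1 h) (addV_some_some.1 h')]
  f p := p.elim (cs.simple s • Y.f b) Y.f
  hf := by
    have key : cs.simple s • Y.f b = cs.simple t • Y.f a := by
      rw [Y.hf _ _ _ hxa, Y.hf _ _ _ hxb, rac_smul_comm hst]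
    rintro s' (_ | p) (_ | q) h
    · exact absurd h addV_none_none
    · rcases addV_none_some.1 h with ⟨h1, h2⟩ | ⟨h1, h2⟩ <;> subst h1 h2
      · simp only [Option.elim_some, Option.elim_none]
        rw [key, rac_smul_smul]
      · simp only [Option.elim_some, Option.elim_none]
        rw [rac_smul_smul]
    · rcases addV_some_none.1 h with ⟨h1, h2⟩ | ⟨h1, h2⟩ <;> subst h1 h2
      · simp only [Option.elim_some, Option.elim_none]
        rw [key]
      · simp only [Option.elim_some, Option.elim_none]
    · exact Y.hf _ _ _ (addV_some_some.1 h)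
  base := some Y.base
  hbase := Y.hbase
  deg := by
    rintro (_ | x)
    · exact ⟨s, some b, addV_none_some.2 (Or.inr ⟨rfl, rfl⟩)⟩
    · obtain ⟨s, y, h⟩ := Y.deg x
      exact ⟨s, some y, addV_some_some.2 h⟩
  carry := by
    intro h hh
    obtain ⟨l, h1, h2⟩ := Y.carry h hh
    exact ⟨l, h1, Walk.map some (fun s x y h => addV_some_some.2 h) l _ _ h2⟩

theorem PG.exists_closed (hcyc : ∀ s t : B, ∃ n : ℕ, (c ^ n) s = t) (h5 : 5 ≤ Fintype.card B)
    (hfix : ∀ s, c s ≠ s) (hne : Nonempty (PG cs H)) :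
    ∃ Y : PG cs H, ∀ x s t a b, CAdj c s t → Y.E s x a → Y.E t x b → FullC Y.E x s t := by
  classical
  obtain ⟨Y0, hY0⟩ : ∃ Y : PG cs H, ∀ Y' : PG cs H, Y.L ≤ Y'.L := by
    obtain ⟨Y, -, hY⟩ := (measure (PG.L (cs := cs) (H := H))).wf.has_min Set.univ
      ⟨hne.some, trivial⟩
    exact ⟨Y, fun Y' => not_lt.1 (hY Y' trivial)⟩
  obtain ⟨Y, ⟨hYL, hYX⟩, hYmax⟩ : ∃ Y : PG cs H, (Y.L = Y0.L ∧ Y0.X ≤ Y.X) ∧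
      ∀ Y' : PG cs H, Y'.L = Y0.L ∧ Y0.X ≤ Y'.X → Nat.card Y'.V ≤ Nat.card Y.V := by
    let S : Set (PG cs H) := {Y | Y.L = Y0.L ∧ Y0.X ≤ Y.X}
    let N : ℕ := (5 * (Y0.L : ℤ) - Y0.X).toNat
    have hN : ∀ Y ∈ S, Nat.card Y.V ≤ N := by
      rintro Y ⟨h1, h2⟩
      have := PG.bound hcyc h5 Y
      rw [h1] at this
      omega
    obtain ⟨Y, hY, hmin⟩ := (measure (fun Y : PG cs H => N - Nat.card Y.V)).wf.has_min S
      ⟨Y0, rfl, le_refl _⟩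
    refine ⟨Y, hY, fun Y' hY' => ?_⟩
    have h1 := hmin Y' hY'
    have h2 := hN Y hY
    have h3 := hN Y' hY'
    simp only [WellFoundedRelation.rel, measure, invImage, InvImage] at h1
    have h1' : ¬ (N - Nat.card Y'.V < N - Nat.card Y.V) := h1
    omega
  have hmin : ∀ Y' : PG cs H, ¬ Y'.L < Y.L := fun Y' h => by
    have := hY0 Y'
    omega
  have hBC : ∀ x s t a b z, CAdj c s t → Y.E s x a → Y.E t x b → ¬ FullC Y.E x s t →
      ¬ Y.E t a z := by
    intro x s t a b z hst hxa hxb nf haz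
    have hst' : s ≠ t := by
      rintro rfl
      rcases hst with h | h <;> exact hfix s h.symm
    have hfz : Y.f z = cs.simple s • Y.f b := by
      rw [Y.hf _ _ _ haz, Y.hf _ _ _ hxa, Y.hf _ _ _ hxb, rac_smul_comm hst]
    have hfb : Y.f b = cs.simple s • Y.f z := by rw [hfz, rac_smul_smul]
    by_cases hz : ∃ u, Y.E s z u
    · obtain ⟨u, hu⟩ := hz
      refine hmin _ (Y.image_lt x s t ⟨hst, ⟨_, hxa⟩, nf⟩
        ⟨⟨Y.f a, a, rfl⟩, ⟨Y.f b, b, rfl⟩, ⟨Y.f z, z, rfl⟩, ⟨x, a, hxa, rfl, rfl⟩,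
          ⟨x, b, hxb, rfl, rfl⟩, ⟨a, z, haz, rfl, rfl⟩, ⟨u, z, Y.symm _ _ _ hu, ?_, rfl⟩⟩)
      exact (Y.hf _ _ _ hu).trans hfb.symm
    by_cases hb : ∃ u, Y.E s b u
    · obtain ⟨u, hu⟩ := hb
      refine hmin _ (Y.image_lt x s t ⟨hst, ⟨_, hxa⟩, nf⟩
        ⟨⟨Y.f a, a, rfl⟩, ⟨Y.f b, b, rfl⟩, ⟨Y.f z, z, rfl⟩, ⟨x, a, hxa, rfl, rfl⟩,
          ⟨x, b, hxb, rfl, rfl⟩, ⟨a, z, haz, rfl, rfl⟩, ⟨b, u, hu, rfl, ?_⟩⟩)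
      exact (Y.hf _ _ _ hu).trans hfz.symm
    exact hmin _ (Y.addEdge_lt s t hst hst' x a b z hxa hxb haz hz hb hfb)
  refine ⟨Y, fun x s t a b hst hxa hxb => ?_⟩
  by_contra nf
  have hst' : s ≠ t := by
    rintro rfl
    rcases hst with h | h <;> exact hfix s h.symm
  have ha : ¬ ∃ u, Y.E t a u := fun ⟨u, hu⟩ => hBC x s t a b u hst hxa hxb nf hu
  have hb : ¬ ∃ u, Y.E s b u := fun ⟨u, hu⟩ =>
    hBC x t s b a u hst.symm hxb hxa (fun h => nf h.symm) hu
  have := Y.fin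
  let Y' := Y.addVert s t hst x a b hxa hxb hst' ha hb
  have hL : Y'.L ≤ Y.L := addV_le Y.E Y.symm s t hst hst' x a b hxa hxb nf ha hb
  have hD : (Darts Y'.E).ncard ≤ (Darts Y.E).ncard + 4 := addV_darts Y.E s t a b
  have hV : Nat.card Y'.V = Nat.card Y.V + 1 := Finite.card_option
  have h1 := hmin Y'
  have h2 := hYmax Y' ⟨by omega, by unfold PG.X at hYX ⊢; omega⟩
  omega

theorem PG.nonempty [Nonempty B] (hH : H.FG) : Nonempty (PG cs H) := by
  classical
  obtain ⟨S, rfl⟩ := hH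
  set H := Subgroup.closure (S : Set W) with hHdef
  choose wd hwd using cs.wordProd_surjective
  let N : ℕ := S.sup (fun h => (wd h).length) + 1
  let V : Set (W ⧸ H) := {p | ∃ l : List B, l.length ≤ N ∧ p = ((cs.wordProd l : W) : W ⧸ H)}
  have hVfin : V.Finite := by
    have : V ⊆ (fun l : List B => ((cs.wordProd l : W) : W ⧸ H)) '' {l | l.length ≤ N} := by
      rintro p ⟨l, h1, h2⟩
      exact ⟨l, h1, h2.symm⟩
    exact ((List.finite_length_le B N).image _).subset this
  let E : B → V → V → Prop := fun s p q => q.1 = cs.simple s • p.1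
  have hsymm : ∀ s x y, E s x y → E s y x := by
    intro s x y h
    show x.1 = cs.simple s • y.1
    rw [show y.1 = cs.simple s • x.1 from h, rac_smul_smul]
  let base : V := ⟨((1 : W) : W ⧸ H), [], by simp, by simp⟩
  have hwalk : ∀ (l : List B) (hl : l.length ≤ N),
      Walk E l base ⟨((cs.wordProd l : W) : W ⧸ H), l, hl, rfl⟩ := by
    intro l
    induction l with
    | nil => intro hl; apply Subtype.ext; simp [base]
    | cons s l ih =>
      intro hl
      have hl' : l.length ≤ N := by simp at hl; omega
      refine ⟨_, ih hl', ?_⟩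
      show ((cs.wordProd (s :: l) : W) : W ⧸ H) = cs.simple s • ((cs.wordProd l : W) : W ⧸ H)
      rw [cs.wordProd_cons]
      rfl
  refine ⟨{ V := V, fin := hVfin, E := E, symm := hsymm, det := ?_, f := Subtype.val,
            hf := fun s x y h => h, base := base, hbase := rfl, deg := ?_, carry := ?_ }⟩
  · intro s x y y' h h'
    exact Subtype.ext ((show y.1 = _ from h).trans (show y'.1 = _ from h').symm)
  · rintro ⟨_, l, hl, rfl⟩
    rcases l with _ | ⟨s, l⟩
    · obtain ⟨s⟩ := ‹Nonempty B›
      refine ⟨s, ⟨((cs.wordProd [s] : W) : W ⧸ H), [s], by simp [N], rfl⟩, ?_⟩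
      show ((cs.wordProd [s] : W) : W ⧸ H) = cs.simple s • ((cs.wordProd [] : W) : W ⧸ H)
      rw [cs.wordProd_cons]
      rfl
    · refine ⟨s, ⟨((cs.wordProd l : W) : W ⧸ H), l, by simp at hl; omega, rfl⟩, ?_⟩
      apply hsymm
      show ((cs.wordProd (s :: l) : W) : W ⧸ H) = cs.simple s • ((cs.wordProd l : W) : W ⧸ H)
      rw [cs.wordProd_cons]
      rfl
  · intro h hh
    rw [hHdef] at hh
    induction hh using Subgroup.closure_induction with
    | mem h hS =>
      have hlen : (wd h).length ≤ N := by
        have := Finset.le_sup (f := fun h => (wd h).length) hS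
        simp only [N]
        exact this.trans (Nat.le_succ _)
      refine ⟨wd h, hwd h, ?_⟩
      have := hwalk (wd h) hlen
      have hb : base = ⟨((cs.wordProd (wd h) : W) : W ⧸ H), wd h, hlen, rfl⟩ := by
        apply Subtype.ext
        show ((1 : W) : W ⧸ H) = ((cs.wordProd (wd h) : W) : W ⧸ H)
        rw [hwd, QuotientGroup.eq]
        simpa using Subgroup.subset_closure hS
      rw [← hb] at this
      exact this
    | one => exact ⟨[], by simp, rfl⟩
    | mul x y _ _ hx hy =>
      obtain ⟨l1, h1, h2⟩ := hx
      obtain ⟨l2, h3, h4⟩ := hy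
      exact ⟨l1 ++ l2, by rw [cs.wordProd_append, h1, h3], Walk.append _ _ _ _ _ h4 h2⟩
    | inv x _ hx =>
      obtain ⟨l, h1, h2⟩ := hx
      exact ⟨l.reverse, by rw [cs.wordProd_reverse, h1], Walk.reverse hsymm _ _ _ h2⟩

end Graphs2

section Reps

variable {B : Type} [Fintype B] [DecidableEq B] {c : Equiv.Perm B} {W : Type} [Group W]
  {cs : CoxeterSystem (racM c) W} {H : Subgroup W}

open Classical in
/-- The involution of the vertices given by the label `s`. -/
noncomputable def PG.sig (Y : PG cs H) (s : B) (x : Y.V) : Y.V :=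
  if h : ∃ a, Y.E s x a then h.choose else x

open Classical in
/-- The cocycle. -/
noncomputable def PG.coc (Y : PG cs H) (s : B) (x : Y.V) : Module.End ℂ (B → ℂ) :=
  if ∃ a, Y.E s x a then trefl c s else 1

theorem PG.sig_pos (Y : PG cs H) {s : B} {x a : Y.V} (h : Y.E s x a) : Y.sig s x = a := by
  have h' : ∃ a, Y.E s x a := ⟨a, h⟩
  unfold PG.sig
  rw [dif_pos h']
  exact Y.det _ _ _ _ h'.choose_spec h

theorem PG.sig_neg (Y : PG cs H) {s : B} {x : Y.V} (h : ¬ ∃ a, Y.E s x a) : Y.sig s x = x := by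
  unfold PG.sig
  rw [dif_neg h]

theorem PG.coc_pos (Y : PG cs H) {s : B} {x a : Y.V} (h : Y.E s x a) :
    Y.coc s x = trefl c s := by
  unfold PG.coc
  rw [if_pos ⟨a, h⟩]

theorem PG.coc_neg (Y : PG cs H) {s : B} {x : Y.V} (h : ¬ ∃ a, Y.E s x a) :
    Y.coc s x = 1 := by
  unfold PG.coc
  rw [if_neg h]

theorem PG.sig_sig (Y : PG cs H) (s : B) (x : Y.V) : Y.sig s (Y.sig s x) = x := by
  by_cases h : ∃ a, Y.E s x a
  · obtain ⟨a, ha⟩ := h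
    rw [Y.sig_pos ha, Y.sig_pos (Y.symm _ _ _ ha)]
  · rw [Y.sig_neg h, Y.sig_neg h]

theorem PG.coc_sig (Y : PG cs H) (s : B) (x : Y.V) : Y.coc s (Y.sig s x) = Y.coc s x := by
  by_cases h : ∃ a, Y.E s x a
  · obtain ⟨a, ha⟩ := h
    rw [Y.sig_pos ha, Y.coc_pos ha, Y.coc_pos (Y.symm _ _ _ ha)]
  · rw [Y.sig_neg h]

theorem trefl_sq (cs : CoxeterSystem (racM c) W) (s : B) : trefl c s * trefl c s = 1 := by
  rw [← tits_simple cs, ← map_mul, cs.simple_mul_simple_self, map_one]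

theorem trefl_comm (cs : CoxeterSystem (racM c) W) {s t : B} (hst : CAdj c s t) :
    trefl c s * trefl c t = trefl c t * trefl c s := by
  rw [← tits_simple cs, ← tits_simple cs, ← map_mul, ← map_mul, rac_comm cs hst]

theorem PG.coc_sq (Y : PG cs H) (s : B) (x : Y.V) : Y.coc s x * Y.coc s x = 1 := by
  unfold PG.coc
  split_ifs
  · exact trefl_sq cs s
  · exact one_mul 1

/-- The generator acting on induced functions. -/
noncomputable def PG.op (Y : PG cs H) (s : B) : Module.End ℂ (Y.V → B → ℂ) where
  toFun φ y := Y.coc s y (φ (Y.sig s y))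
  map_add' φ ψ := by funext y; simp
  map_smul' r φ := by funext y; simp

theorem PG.op_apply (Y : PG cs H) (s : B) (φ : Y.V → B → ℂ) (y : Y.V) :
    Y.op s φ y = Y.coc s y (φ (Y.sig s y)) := rfl

open Classical in
theorem PG.op_single (Y : PG cs H) (s : B) (x : Y.V) (v : B → ℂ) :
    Y.op s (Pi.single x v) = Pi.single (Y.sig s x) (Y.coc s x v) := by
  funext y
  rw [PG.op_apply]
  by_cases h : y = Y.sig s x
  · subst h
    rw [Y.sig_sig, Y.coc_sig, Pi.single_eq_same, Pi.single_eq_same]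
  · have h' : Y.sig s y ≠ x := by
      rintro rfl
      exact h (Y.sig_sig s y).symm
    rw [Pi.single_eq_of_ne h', Pi.single_eq_of_ne h, map_zero]

/-- Closedness under squares. -/
def PG.Closed (Y : PG cs H) : Prop :=
  ∀ x s t a b, CAdj c s t → Y.E s x a → Y.E t x b → FullC Y.E x s t

theorem PG.Closed.comm {Y : PG cs H} (hY : Y.Closed) {s t : B} (hst : CAdj c s t) (x : Y.V) :
    Y.sig t (Y.sig s x) = Y.sig s (Y.sig t x) ∧
      Y.coc s x * Y.coc t (Y.sig s x) = Y.coc t x * Y.coc s (Y.sig t x) := by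
  have key : ∀ (s t : B) (x a : Y.V), CAdj c s t → Y.E s x a → (¬ ∃ b, Y.E t x b) →
      ¬ ∃ b, Y.E t a b := by
    rintro s t x a hst ha hb ⟨b, hab⟩
    obtain ⟨p, q, z, h1, h2, h3, h4⟩ := hY a s t x b hst (Y.symm _ _ _ ha) hab
    have := Y.det _ _ _ _ h1 (Y.symm _ _ _ ha)
    subst this
    exact hb ⟨_, h3⟩
  by_cases hs : ∃ a, Y.E s x a <;> by_cases ht : ∃ b, Y.E t x b
  · obtain ⟨a, ha⟩ := hs
    obtain ⟨b, hb⟩ := ht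
    obtain ⟨p, q, z, h1, h2, h3, h4⟩ := hY x s t a b hst ha hb
    rw [Y.sig_pos h1, Y.sig_pos h2, Y.sig_pos h3, Y.sig_pos h4, Y.coc_pos h1, Y.coc_pos h2,
      Y.coc_pos h3, Y.coc_pos h4]
    exact ⟨rfl, trefl_comm cs hst⟩
  · obtain ⟨a, ha⟩ := hs
    have := key s t x a hst ha ht
    rw [Y.sig_neg ht, Y.sig_pos ha, Y.sig_neg this, Y.coc_neg this, Y.coc_neg ht]
    exact ⟨rfl, by rw [one_mul, mul_one]⟩
  · obtain ⟨a, ha⟩ := ht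
    have := key t s x a hst.symm ha hs
    rw [Y.sig_neg hs, Y.sig_pos ha, Y.sig_neg this, Y.coc_neg this, Y.coc_neg hs]
    exact ⟨rfl, by rw [one_mul, mul_one]⟩
  · rw [Y.sig_neg hs, Y.sig_neg ht, Y.sig_neg hs, Y.coc_neg hs, Y.coc_neg ht]
    exact ⟨rfl, rfl⟩

theorem PG.Closed.liftable {Y : PG cs H} (hY : Y.Closed) : (racM c).IsLiftable Y.op := by
  apply racM_liftable
  · intro s
    apply LinearMap.ext
    intro φ
    funext y
    rw [Module.End.mul_apply, PG.op_apply, PG.op_apply, Y.sig_sig, Y.coc_sig,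
      ← Module.End.mul_apply, Y.coc_sq]
    rfl
  · intro s t _ hst
    apply LinearMap.ext
    intro φ
    funext y
    rw [Module.End.mul_apply, Module.End.mul_apply, PG.op_apply, PG.op_apply, PG.op_apply,
      PG.op_apply, ← Module.End.mul_apply, ← Module.End.mul_apply, (hY.comm hst y).1,
      (hY.comm hst y).2]

/-- The induced representation. -/
noncomputable def PG.Closed.rep {Y : PG cs H} (hY : Y.Closed) :
    W →* Module.End ℂ (Y.V → B → ℂ) := cs.lift ⟨Y.op, hY.liftable⟩

theorem PG.Closed.rep_simple {Y : PG cs H} (hY : Y.Closed) (s : B) :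
    hY.rep (cs.simple s) = Y.op s := cs.lift_apply_simple hY.liftable s

open Classical in
theorem PG.Closed.rep_walk {Y : PG cs H} (hY : Y.Closed) (x : Y.V) (v : B → ℂ) :
    ∀ (l : List B) (y : Y.V), Walk Y.E l x y →
      hY.rep (cs.wordProd l) (Pi.single x v) = Pi.single y (tits cs (cs.wordProd l) v)
  | [], y, h => by
    cases h
    simp
  | s :: l, y, ⟨z, h1, h2⟩ => by
    rw [cs.wordProd_cons, map_mul, map_mul, Module.End.mul_apply, Module.End.mul_apply,
      PG.Closed.rep_walk hY x v l z h1, hY.rep_simple, Y.op_single, Y.sig_pos h2, Y.coc_pos h2,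
      tits_simple]

open Classical in
theorem PG.Closed.rep_any {Y : PG cs H} (hY : Y.Closed) (w : W) (x : Y.V) :
    ∃ (y : Y.V) (u : W), Y.f y = u • Y.f x ∧
      ∀ v, hY.rep w (Pi.single x v) = Pi.single y (tits cs u v) := by
  induction w using cs.simple_induction_left with
  | one => exact ⟨x, 1, by simp, fun v => by simp⟩
  | mul_simple_left w s ih =>
    obtain ⟨y, u, h1, h2⟩ := ih
    by_cases h : ∃ a, Y.E s y a
    · obtain ⟨a, ha⟩ := h
      refine ⟨a, cs.simple s * u, ?_, fun v => ?_⟩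
      · rw [Y.hf _ _ _ ha, h1, mul_smul]
      · rw [map_mul, map_mul, Module.End.mul_apply, Module.End.mul_apply, h2, hY.rep_simple,
          Y.op_single, Y.sig_pos ha, Y.coc_pos ha, tits_simple]
    · refine ⟨y, u, h1, fun v => ?_⟩
      rw [map_mul, Module.End.mul_apply, h2, hY.rep_simple, Y.op_single, Y.sig_neg h,
        Y.coc_neg h, Module.End.one_apply]

theorem rac_zariski [Nonempty B] (cs : CoxeterSystem (racM c) W)
    (hcyc : ∀ s t : B, ∃ n : ℕ, (c ^ n) s = t)
    (h5 : 5 ≤ Fintype.card B) (hfix : ∀ s, c s ≠ s) (H : Subgroup W) (hH : H.FG) :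
    ∃ (n : ℕ) (ρ : W →* GL (Fin n) ℂ), 1 ≤ n ∧ Function.Injective ρ ∧
      ∀ γ : W, γ ∉ H → ∃ P : MvPolynomial (Fin n × Fin n) ℂ,
          (∀ δ ∈ H, evalAtGL (ρ δ) P = 0) ∧ evalAtGL (ρ γ) P ≠ 0 := by
  classical
  obtain ⟨Y, hY'⟩ := PG.exists_closed (cs := cs) (H := H) hcyc h5 hfix (PG.nonempty hH)
  have hY : Y.Closed := hY'
  haveI := Y.fin
  haveI : Fintype Y.V := Fintype.ofFinite _
  let R : W →* Module.End ℂ ((Y.V → B → ℂ) × (B → ℂ)) :=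
    ((LinearMap.prodMapRingHom ℂ (Y.V → B → ℂ) (B → ℂ) : _ →+* _) : _ →* _).comp
      (MonoidHom.prod hY.rep (tits cs))
  have hR : ∀ w p, R w p = (hY.rep w p.1, tits cs w p.2) := fun w p => rfl
  refine linear_to_poly R ?_ H ?_
  · intro w w' h
    apply tits_injective cs
    apply LinearMap.ext
    intro v
    have := congrArg (fun T : Module.End ℂ ((Y.V → B → ℂ) × (B → ℂ)) => (T (0, v)).2) h
    simpa only [hR] using this
  · intro w hw
    let l : (B → ℂ) → B → (Module.End ℂ ((Y.V → B → ℂ) × (B → ℂ)) →ₗ[ℂ] ℂ) := fun v k =>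
      { toFun := fun T => (T (Pi.single Y.base v, 0)).1 Y.base k - (T (0, v)).2 k
        map_add' := fun T T' => by simp; ring
        map_smul' := fun r T => by simp; ring }
    have hl : ∀ v k w, l v k (R w) = hY.rep w (Pi.single Y.base v) Y.base k - tits cs w v k :=
      fun v k w => rfl
    by_contra hcon
    push Not at hcon
    have hz : ∀ v k, l v k (R w) = 0 := by
      intro v k
      apply hcon
      intro δ hδ
      obtain ⟨wd, h1, h2⟩ := Y.carry δ hδ
      rw [hl, ← h1, hY.rep_walk _ _ _ _ h2, Pi.single_eq_same, sub_self]
    obtain ⟨y, u, h1, h2⟩ := hY.rep_any w Y.base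
    have hz' : ∀ v, (Pi.single y (tits cs u v) : Y.V → B → ℂ) Y.base = tits cs w v := by
      intro v
      funext k
      have := hz v k
      rw [hl, h2, sub_eq_zero] at this
      exact this
    by_cases hy : y = Y.base
    · subst hy
      have : u = w := by
        apply tits_injective cs
        apply LinearMap.ext
        intro v
        rw [← hz' v, Pi.single_eq_same]
      subst this
      apply hw
      rw [Y.hbase] at h1
      have h1' : ((1 : W) : W ⧸ H) = ((u * 1 : W) : W ⧸ H) := h1
      rw [QuotientGroup.eq] at h1'
      simpa using h1'
    · have h0 : ∀ v, tits cs w v = 0 := by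
        intro v
        rw [← hz' v, Pi.single_eq_of_ne (Ne.symm hy)]
      have h00 : tits cs w⁻¹ (tits cs w 1) = 1 := by
        rw [← Module.End.mul_apply, ← map_mul, inv_mul_cancel, map_one (tits cs), Module.End.one_apply]
      rw [h0, map_zero] at h00
      obtain ⟨b⟩ := ‹Nonempty B›
      exact zero_ne_one (congrFun h00 b)

end Reps

section Embedding

open scoped Fin.NatCast Fin.CommRing

theorem end_mul {α : Type*} (f h : Function.End α) (p : α) : (f * h) p = f (h p) := rfl

theorem end_one {α : Type*} (p : α) : (1 : Function.End α) p = p := rfl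

/-- The presented group, without the wrapper. -/
abbrev SG (g : ℕ) : Type :=
  PresentedGroup ({surfaceRelator g} : Set (FreeGroup (Fin g ⊕ Fin g)))

/-- The two groups are the same. -/
noncomputable def sgEquiv (g : ℕ) : SurfaceGroup g ≃* SG g where
  toFun x := x
  invFun x := x
  left_inv _ := rfl
  right_inv _ := rfl
  map_mul' _ _ := rfl

/-- The cyclic order on the mirrors. -/
def cyc (g : ℕ) : Equiv.Perm (Bool × Fin (g + 1)) where
  toFun p := match p with
    | (false, k) => (true, k)
    | (true, k) => (false, k + 1)
  invFun p := match p with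
    | (true, k) => (false, k)
    | (false, k) => (true, k - 1)
  left_inv := by rintro ⟨_ | _, k⟩ <;> simp
  right_inv := by rintro ⟨_ | _, k⟩ <;> simp

theorem cyc_false (g : ℕ) (k : Fin (g + 1)) : cyc g (false, k) = (true, k) := rfl
theorem cyc_true (g : ℕ) (k : Fin (g + 1)) : cyc g (true, k) = (false, k + 1) := rfl

theorem cyc_pow (g : ℕ) (b : Bool) (j : Fin (g + 1)) (n : ℕ) :
    (cyc g ^ (2 * n)) (b, j) = (b, j + (n : Fin (g + 1))) := by
  induction n with
  | zero => simp
  | succ n ih =>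
    rw [show 2 * (n + 1) = 1 + (1 + 2 * n) by ring, pow_add, pow_add, Equiv.Perm.mul_apply,
      Equiv.Perm.mul_apply, ih, pow_one]
    cases b
    · rw [cyc_false, cyc_true]; push_cast; rw [add_assoc]
    · rw [cyc_true, cyc_false]; push_cast; rw [add_assoc]

theorem cyc_trans (g : ℕ) (s t : Bool × Fin (g + 1)) : ∃ n : ℕ, (cyc g ^ n) s = t := by
  obtain ⟨b, j⟩ := s
  obtain ⟨b', j'⟩ := t
  have key : ∀ b j j', ∃ n : ℕ, (cyc g ^ n) (b, j) = (b, j') := by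
    intro b j j'
    refine ⟨2 * (j' - j).val, ?_⟩
    rw [cyc_pow, Fin.cast_val_eq_self]
    simp
  have key' : ∀ b j j', ∃ n : ℕ, (cyc g ^ n) (b, j) = (!b, j') := by
    intro b j j'
    obtain ⟨n, hn⟩ := key b j (if b then j' - 1 else j')
    refine ⟨1 + n, ?_⟩
    rw [pow_add, Equiv.Perm.mul_apply, hn, pow_one]
    cases b
    · simp [cyc_false]
    · simp [cyc_true]
  cases b <;> cases b'
  · exact key _ _ _
  · exact key' _ _ _
  · exact key' _ _ _
  · exact key _ _ _

theorem cyc_fix (g : ℕ) (s : Bool × Fin (g + 1)) : cyc g s ≠ s := by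
  obtain ⟨_ | _, k⟩ := s
  · rw [cyc_false]; simp
  · rw [cyc_true]; simp

theorem cyc_adj (g : ℕ) (s t : Bool × Fin (g + 1)) (h : CAdj (cyc g) s t) :
    ∃ k j : Fin (g + 1), (j = k ∨ j = k + 1) ∧
      ((s = (true, k) ∧ t = (false, j)) ∨ (s = (false, j) ∧ t = (true, k))) := by
  rcases h with h | h
  · obtain ⟨_ | _, k⟩ := s
    · exact ⟨k, k, Or.inl rfl, Or.inr ⟨rfl, h⟩⟩
    · exact ⟨k, k + 1, Or.inr rfl, Or.inl ⟨rfl, h⟩⟩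
  · obtain ⟨_ | _, k⟩ := t
    · exact ⟨k, k, Or.inl rfl, Or.inl ⟨h, rfl⟩⟩
    · exact ⟨k, k + 1, Or.inr rfl, Or.inr ⟨h, rfl⟩⟩

/-- Generator `a`, with a natural number index. -/
def gA (g : ℕ) (k : ℕ) : SG g :=
  if h : k < g then PresentedGroup.of (Sum.inl ⟨k, h⟩) else 1

/-- Generator `b`, with a natural number index. -/
def gB (g : ℕ) (k : ℕ) : SG g :=
  if h : k < g then PresentedGroup.of (Sum.inr ⟨k, h⟩) else 1

/-- Partial products of the `b`s. -/
def gP (g : ℕ) : ℕ → SG g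
  | 0 => 1
  | k + 1 => gB g k * gP g k

/-- Partial products of the commutators. -/
def gC (g : ℕ) : ℕ → SG g
  | 0 => 1
  | k + 1 => gC g k * ⁅gA g k, gB g k⁆

/-- First transport. -/
def gO (g : ℕ) : ℕ → SG g
  | 0 => 1
  | k + 1 => (gP g k)⁻¹ * gA g k * gP g k

/-- Second transport. -/
def gO' (g : ℕ) : ℕ → SG g
  | 0 => 1
  | k + 1 => gC g k * gA g k

theorem prod_range_rec {G : Type*} [Group G] (f C : ℕ → G) (h0 : C 0 = 1)
    (hs : ∀ k, C (k + 1) = C k * f k) (n : ℕ) : ((List.range n).map f).prod = C n := by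
  induction n with
  | zero => simp [h0]
  | succ n ih => rw [List.range_succ, List.map_append, List.prod_append, ih, hs]; simp

theorem relator_map {g : ℕ} {G : Type*} [Group G] (F : FreeGroup (Fin g ⊕ Fin g) →* G)
    (a b : ℕ → G) (ha : ∀ i : Fin g, F (FreeGroup.of (Sum.inl i)) = a i)
    (hb : ∀ i : Fin g, F (FreeGroup.of (Sum.inr i)) = b i) :
    F (surfaceRelator g) = ((List.range g).map (fun k => ⁅a k, b k⁆)).prod := by
  unfold surfaceRelator
  rw [map_list_prod, List.map_map, ← List.map_coe_finRange_eq_range, List.map_map]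
  congr 1
  apply List.map_congr_left
  intro i _
  simp only [Function.comp_apply, map_commutatorElement, ha, hb]

theorem gC_last (g : ℕ) : gC g g = 1 := by
  have h := relator_map (g := g) (PresentedGroup.mk {surfaceRelator g}) (gA g) (gB g)
    (fun i => by simp [gA, PresentedGroup.of]) (fun i => by simp [gB, PresentedGroup.of])
  rw [prod_range_rec _ (gC g) rfl (fun k => rfl)] at h
  rw [← h]
  exact PresentedGroup.one_of_mem rfl

theorem g_sq1 (g k : ℕ) : gO' g k * gP g k = (gC g k * gP g k) * gO g k := by
  cases k with
  | zero => rfl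
  | succ k => simp only [gO', gP, gC, gO, commutatorElement_def]; group

theorem g_sq2 (g k : ℕ) : gO' g (k + 1) * gP g k = (gC g k * gP g k) * gO g (k + 1) := by
  simp only [gO', gP, gC, gO]; group

theorem g_sq3 (g : ℕ) : gO' g 0 * gP g g = (gC g g * gP g g) * gO g 0 := by
  rw [gC_last]; simp [gO, gO']

theorem g_sq (g : ℕ) (k j : Fin (g + 1)) (h : j = k ∨ j = k + 1) :
    gO' g j * gP g k = (gC g k * gP g k) * gO g j := by
  rcases h with rfl | rfl
  · exact g_sq1 g _
  · rw [Fin.val_add_one]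
    split_ifs with h
    · rw [h]; exact g_sq3 g
    · exact g_sq2 g _

/-- Flip in the first direction. -/
def flipE {G : Type} [Group G] (X X' : G) : Function.End (G × Bool × Bool) := fun p =>
  ((if p.2.1 then (if p.2.2 then X' else X)⁻¹ else (if p.2.2 then X' else X)) * p.1, !p.2.1, p.2.2)

/-- Flip in the second direction. -/
def flipO {G : Type} [Group G] (X X' : G) : Function.End (G × Bool × Bool) := fun p =>
  ((if p.2.2 then (if p.2.1 then X' else X)⁻¹ else (if p.2.1 then X' else X)) * p.1, p.2.1, !p.2.2)

theorem flipE_sq {G : Type} [Group G] (X X' : G) : flipE X X' * flipE X X' = 1 := by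
  funext p
  obtain ⟨γ, _ | _, _ | _⟩ := p <;> simp [flipE, end_mul, end_one]

theorem flipO_sq {G : Type} [Group G] (X X' : G) : flipO X X' * flipO X X' = 1 := by
  funext p
  obtain ⟨γ, _ | _, _ | _⟩ := p <;> simp [flipO, end_mul, end_one]

theorem flip_comm {G : Type} [Group G] (X X' Y Y' : G) (h : Y' * X = X' * Y) :
    flipE X X' * flipO Y Y' = flipO Y Y' * flipE X X' := by
  have hY : Y' = X' * Y * X⁻¹ := by rw [← h]; group
  subst hY
  funext p
  obtain ⟨γ, _ | _, _ | _⟩ := p <;>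
    simp [flipE, flipO, end_mul, mul_assoc]

/-- The mirrors acting. -/
def theta0 (g : ℕ) : Bool × Fin (g + 1) → Function.End (SG g × Bool × Bool)
  | (true, k) => flipE (gP g k) (gC g k * gP g k)
  | (false, k) => flipO (gO g k) (gO' g k)

theorem theta0_liftable (g : ℕ) : (racM (cyc g)).IsLiftable (theta0 g) := by
  apply racM_liftable
  · rintro ⟨_ | _, k⟩
    · exact flipO_sq _ _
    · exact flipE_sq _ _
  · intro s t _ hst
    obtain ⟨k, j, h, ⟨rfl, rfl⟩ | ⟨rfl, rfl⟩⟩ := cyc_adj g s t hst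
    · exact flip_comm _ _ _ _ (g_sq g k j h)
    · exact (flip_comm _ _ _ _ (g_sq g k j h)).symm

/-- The reflection group. -/
abbrev RW (g : ℕ) : Type := (racM (cyc g)).Group

/-- Its Coxeter system. -/
noncomputable abbrev rcs (g : ℕ) : CoxeterSystem (racM (cyc g)) (RW g) :=
  (racM (cyc g)).toCoxeterSystem

/-- The action. -/
noncomputable def theta (g : ℕ) : RW g →* Function.End (SG g × Bool × Bool) :=
  (rcs g).lift ⟨theta0 g, theta0_liftable g⟩

/-- Mirrors `o`. -/
noncomputable def rO (g k : ℕ) : RW g := (rcs g).simple (false, (k : Fin (g + 1)))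

/-- Mirrors `ε`. -/
noncomputable def rE (g k : ℕ) : RW g := (rcs g).simple (true, (k : Fin (g + 1)))

theorem rO_sq (g k : ℕ) : rO g k * rO g k = 1 := (rcs g).simple_mul_simple_self _
theorem rE_sq (g k : ℕ) : rE g k * rE g k = 1 := (rcs g).simple_mul_simple_self _

theorem rO_rE (g k : ℕ) : rO g k * rE g k = rE g k * rO g k :=
  rac_comm (rcs g) (Or.inl rfl)

theorem rO_rE_succ (g k : ℕ) : rO g (k + 1) * rE g k = rE g k * rO g (k + 1) := by
  apply rac_comm (rcs g)
  right
  rw [cyc_true]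
  push_cast
  rfl

theorem rO_zero_rE (g : ℕ) : rO g 0 * rE g g = rE g g * rO g 0 := by
  apply rac_comm (rcs g)
  right
  rw [cyc_true]
  simp

theorem theta_rO (g k : ℕ) (hk : k ≤ g) : theta g (rO g k) = flipO (gO g k) (gO' g k) := by
  have h1 : theta g (rO g k) = theta0 g (false, (k : Fin (g + 1))) :=
    (rcs g).lift_apply_simple (theta0_liftable g) _
  rw [h1]
  have : ((k : Fin (g + 1)) : ℕ) = k := by
    rw [Fin.val_natCast, Nat.mod_eq_of_lt (by omega)]
  simp only [theta0, this]

theorem theta_rE (g k : ℕ) (hk : k ≤ g) :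
    theta g (rE g k) = flipE (gP g k) (gC g k * gP g k) := by
  have h1 : theta g (rE g k) = theta0 g (true, (k : Fin (g + 1))) :=
    (rcs g).lift_apply_simple (theta0_liftable g) _
  rw [h1]
  have : ((k : Fin (g + 1)) : ℕ) = k := by
    rw [Fin.val_natCast, Nat.mod_eq_of_lt (by omega)]
  simp only [theta0, this]

/-- Image of `a`. -/
noncomputable def rA (g k : ℕ) : RW g :=
  rE g 0 * rE g k * rO g 0 * rO g (k + 1) * rE g k * rE g 0

/-- Image of `b`. -/
noncomputable def rB (g k : ℕ) : RW g :=
  rE g 0 * rE g (k + 1) * rE g k * rE g 0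

/-- Partial products of commutators. -/
noncomputable def rC (g k : ℕ) : RW g :=
  rO g 0 * rE g 0 * rE g k * rO g 0 * rE g k * rE g 0

theorem comm_calc {G : Type*} [Group G] (x z e e' o : G) (hx : x * x = 1) (hz : z * z = 1)
    (he : e * e = 1) (he' : e' * e' = 1) (ho : o * o = 1) (h1 : o * e = e * o)
    (h2 : o * e' = e' * o) :
    (x * z * e * x * e * z) * ⁅z * e * x * o * e * z, z * e' * e * z⁆ =
      x * z * e' * x * e' * z := by
  have ix : x⁻¹ = x := inv_eq_of_mul_eq_one_left hx
  have iz : z⁻¹ = z := inv_eq_of_mul_eq_one_left hz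
  have ie : e⁻¹ = e := inv_eq_of_mul_eq_one_left he
  have ie' : e'⁻¹ = e' := inv_eq_of_mul_eq_one_left he'
  have io : o⁻¹ = o := inv_eq_of_mul_eq_one_left ho
  have cx : ∀ y, x * (x * y) = y := fun y => by rw [← mul_assoc, hx, one_mul]
  have cz : ∀ y, z * (z * y) = y := fun y => by rw [← mul_assoc, hz, one_mul]
  have ce : ∀ y, e * (e * y) = y := fun y => by rw [← mul_assoc, he, one_mul]
  have co : ∀ y, o * (o * y) = y := fun y => by rw [← mul_assoc, ho, one_mul]
  have m1 : ∀ y, o * (e * y) = e * (o * y) := fun y => by rw [← mul_assoc, h1, mul_assoc]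
  have m2 : ∀ y, o * (e' * y) = e' * (o * y) := fun y => by rw [← mul_assoc, h2, mul_assoc]
  simp only [commutatorElement_def, mul_inv_rev, ix, iz, ie, ie', io, mul_assoc, cx, cz, ce, co,
    m1, m2]

theorem rC_succ (g k : ℕ) : rC g (k + 1) = rC g k * ⁅rA g k, rB g k⁆ :=
  (comm_calc _ _ _ _ _ (rO_sq g 0) (rE_sq g 0) (rE_sq g k) (rE_sq g (k + 1)) (rO_sq g (k + 1))
    (rO_rE_succ g k) (rO_rE g (k + 1))).symm

theorem rC_zero (g : ℕ) : rC g 0 = 1 := by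
  unfold rC
  rw [mul_assoc (rO g 0), rE_sq, mul_one, rO_sq, one_mul, rE_sq]

theorem rC_last (g : ℕ) : rC g g = 1 := by
  unfold rC
  rw [mul_assoc (rO g 0 * rE g 0), ← rO_zero_rE, rO_rE, ← mul_assoc, mul_assoc (rE g 0), rO_sq,
    mul_one, mul_assoc (rE g 0), rE_sq, mul_one, rE_sq]

/-- The generators map. -/
noncomputable def emb0 (g : ℕ) : Fin g ⊕ Fin g → RW g
  | Sum.inl i => rA g i
  | Sum.inr i => rB g i

theorem emb0_rel (g : ℕ) : ∀ r ∈ ({surfaceRelator g} : Set (FreeGroup (Fin g ⊕ Fin g))),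
    FreeGroup.lift (emb0 g) r = 1 := by
  rintro r rfl
  rw [relator_map (FreeGroup.lift (emb0 g)) (rA g) (rB g) (fun i => by simp [emb0])
    (fun i => by simp [emb0]), prod_range_rec _ (rC g) (rC_zero g) (rC_succ g), rC_last]

/-- The embedding. -/
noncomputable def emb (g : ℕ) : SG g →* RW g := PresentedGroup.toGroup (emb0_rel g)

theorem theta_rA (g k : ℕ) (hk : k < g) (δ : SG g) :
    theta g (rA g k) (δ, false, false) = (gA g k * δ, false, false) := by
  unfold rA
  simp only [map_mul]
  rw [theta_rE g 0 (by omega), theta_rE g k (by omega), theta_rO g 0 (by omega),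
    theta_rO g (k + 1) (by omega)]
  simp [flipE, flipO, end_mul, gP, gO, mul_assoc]

theorem theta_rB (g k : ℕ) (hk : k < g) (δ : SG g) :
    theta g (rB g k) (δ, false, false) = (gB g k * δ, false, false) := by
  unfold rB
  simp only [map_mul]
  rw [theta_rE g 0 (by omega), theta_rE g k (by omega), theta_rE g (k + 1) (by omega)]
  simp [flipE, end_mul, gP, mul_assoc]

theorem theta_emb (g : ℕ) (γ : SG g) : ∀ δ : SG g,
    theta g (emb g γ) (δ, false, false) = (γ * δ, false, false) := by
  have hγ : γ ∈ Subgroup.closure (Set.range (PresentedGroup.of (rels := {surfaceRelator g}))) := by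
    rw [PresentedGroup.closure_range_of]
    trivial
  induction hγ using Subgroup.closure_induction with
  | mem x hx =>
    obtain ⟨i | i, rfl⟩ := hx
    · intro δ
      have : emb g (PresentedGroup.of (Sum.inl i)) = rA g i := PresentedGroup.toGroup.of _
      rw [this, theta_rA g i i.2]
      simp [gA]
    · intro δ
      have : emb g (PresentedGroup.of (Sum.inr i)) = rB g i := PresentedGroup.toGroup.of _
      rw [this, theta_rB g i i.2]
      simp [gB]
  | one => intro δ; simp [end_one]
  | mul x y _ _ hx hy =>
    intro δ
    rw [map_mul, map_mul]
    show theta g (emb g x) (theta g (emb g y) (δ, false, false)) = _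
    rw [hy, hx, mul_assoc]
  | inv x _ hx =>
    intro δ
    have h : theta g (emb g x⁻¹) (theta g (emb g x) (x⁻¹ * δ, false, false)) =
        (x⁻¹ * δ, false, false) := by
      show (theta g (emb g x⁻¹) * theta g (emb g x)) (x⁻¹ * δ, false, false) = _
      rw [← map_mul, ← map_mul, inv_mul_cancel, map_one, map_one]
      rfl
    rw [hx, mul_inv_cancel_left] at h
    exact h

theorem emb_injective (g : ℕ) : Function.Injective (emb g) := by
  intro x y h
  have h1 := theta_emb g x 1
  rw [h, theta_emb g y 1] at h1
  simpa using (congrArg Prod.fst h1).symm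

end Embedding

/-- Theorem 1.1 (surface case): a finitely generated subgroup of the fundamental group of
a closed surface of genus `g ≥ 2` is closed in the Zariski topology associated to some
faithful finite-dimensional representation. -/
theorem surface_subgroup_zariski_closed (g : ℕ) (hg : 2 ≤ g)
    (Δ₀ : Subgroup (SurfaceGroup g)) (hΔ₀ : Δ₀.FG) :
    ∃ (n : ℕ) (ρ : SurfaceGroup g →* GL (Fin n) ℂ), 1 ≤ n ∧
      Function.Injective ρ ∧
      ∀ γ : SurfaceGroup g, γ ∉ Δ₀ →
        ∃ P : MvPolynomial (Fin n × Fin n) ℂ,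
          (∀ δ ∈ Δ₀, evalAtGL (ρ δ) P = 0) ∧ evalAtGL (ρ γ) P ≠ 0 := by
  let φ : SurfaceGroup g →* RW g := (emb g).comp (sgEquiv g).toMonoidHom
  have hφ : Function.Injective φ := (emb_injective g).comp (sgEquiv g).injective
  have hF : (Δ₀.map φ).FG := by
    classical
    obtain ⟨S, hS⟩ := hΔ₀
    refine ⟨S.image φ, ?_⟩
    rw [← hS, MonoidHom.map_closure, Finset.coe_image]
  obtain ⟨n, ρ, h1, h2, h3⟩ := rac_zariski (rcs g) (cyc_trans g) (by simp; omega) (cyc_fix g)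
    (Δ₀.map φ) hF
  refine ⟨n, ρ.comp φ, h1, h2.comp hφ, fun γ hγ => ?_⟩
  obtain ⟨P, hP1, hP2⟩ := h3 (φ γ) (by
    rintro ⟨δ, hδ, h⟩
    exact hγ (hφ h ▸ hδ))
  exact ⟨P, fun δ hδ => hP1 (φ δ) ⟨δ, hδ, rfl⟩, hP2⟩
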